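/- If q̄′(X) is nowhere vanishing on K (i.e. q̄′(ω) ≠ 0 for every ω ∈ K), then Φ is a Fubini function on F×F. -/

import Mathlib

/-!
For fixed `x` in the ring of integers, `y ↦ Φ(x, y)` is a translate of the lift of `f(x̄, ·)`, so
integrating over `y` gives the lift of `g(u) = ∫ f(u, v) dv`, which is locally constant of compact
support.

For fixed `y` write `r = -R ≥ 1` and `z = t^r y`. Then `Φ(x, y) ≠ 0` forces `q(x) ≡ z` modulo
`t^r`; in particular `z` is integral and `x̄` is one of the finitely many solutions `ω` of
`q̄ = z̄`. As `q̄'(ω) ≠ 0`, the solution `ω` lifts to an `x_ω` with `q(x_ω) ≡ z` modulo `t^{r+1}`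
(`CDVF.exists_approx_root`; an approximate solution suffices), and near `x_ω` the polynomial `q` is
linear to the precision that the residue field sees. So `Φ(·, y)` is the sum over `ω` of the lifts
of `v ↦ f(ω, -q̄'(ω) v)` at `x_ω, r` (`CDVF.Phi_section_of_mem`). Its integral is `X^r G(z̄)`, where
`G(c) = ∑_{q̄(ω) = c} ‖q̄'(ω)‖⁻¹ g(ω)` is the push-forward of `g` along `q̄` (`fibreSum`). As a
function of `y` this is `X^r` times the lift of `G` at `0, -r`, with integral `∫ G`.

It remains to see `∫ G = ∫ g`, the change of variables formula for the étale map `q̄` on `K`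
(`integral_fibreSum`). If `g ≠ 0`, its periods show that `K` is ultrametric; the support of `g` is
then a finite disjoint union of balls each of which `q̄` maps bijectively onto a ball of radius
scaled by `‖q̄'‖`. Haar measure is scaled by `‖·‖` because of the compatibility of `∫^F` with
multiplication by units (`CDVF.IsIntegralF.integral_comp_mul`).
-/

noncomputable section

open MeasureTheory Polynomial
open scoped Classical

/-- The field `ℂ(X)` of complex rational functions. -/
abbrev CX : Type := RatFunc ℂ

/-- A complete discrete valuation field with residue field `K`:
`Fc` is the field, `O` its ring of integers, `t` a fixed prime element,
`res` the residue map and `ν` the discrete valuation.  The axioms say that `O` is a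
valuation subring of `Fc`, `t` is irreducible in `O`, `res` is surjective with kernel
`tO`, every nonzero element is a unit times `t ^ ν`, and `O` is `t`-adically complete. -/
structure CDVF (K : Type) [Field K] : Type 1 where
  Fc : Type
  fieldF : Field Fc
  O : Subring Fc
  t : Fc
  ht : t ∈ O
  res : O →+* K
  ν : Fc → ℤ
  hval : ∀ x : Fc, x ∈ O ∨ x⁻¹ ∈ O
  hirr : Irreducible (⟨t, ht⟩ : O)
  hres_surj : Function.Surjective res
  hres_ker : ∀ x : O, res x = 0 ↔ (⟨t, ht⟩ : O) ∣ x
  hν : ∀ x : Fc, x ≠ 0 → ∃ u : O, IsUnit u ∧ x = (u : Fc) * t ^ ν x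
  hcomplete : ∀ s : ℕ → O, (∀ n : ℕ, (⟨t, ht⟩ : O) ^ n ∣ (s (n + 1) - s n)) →
    ∃ L : O, ∀ n : ℕ, (⟨t, ht⟩ : O) ^ n ∣ (L - s n)

attribute [instance] CDVF.fieldF

namespace CDVF

variable {K : Type} [Field K] (E : CDVF K)

/-- The residue map, extended by zero outside the ring of integers. -/
def resF (x : E.Fc) : K := if h : x ∈ E.O then E.res ⟨x, h⟩ else 0

/-- The translated fractional ideal `a + t^c O`. -/
def tfi (a : E.Fc) (c : ℤ) : Set E.Fc := {y : E.Fc | ∃ z ∈ E.O, y = a + E.t ^ c * z}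

/-- The lift `f⁰` of a function on the residue field. -/
def lift0 (f : K → ℂ) : E.Fc → CX := fun x =>
  if x ∈ E.O then algebraMap ℂ CX (f (E.resF x)) else 0

/-- The lift `f^{a,n}` of `f` at `a, n`, determined by `f^{a,n}(a + t^n x) = f⁰(x)`. -/
def liftAt (f : K → ℂ) (a : E.Fc) (n : ℤ) : E.Fc → CX := fun z =>
  E.lift0 f (E.t ^ (-n) * (z - a))

/-- The two-dimensional lift `f⁰` of `f : K × K → ℂ`. -/
def lift0₂ (f : K × K → ℂ) : E.Fc → E.Fc → CX := fun x y =>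
  if x ∈ E.O ∧ y ∈ E.O then algebraMap ℂ CX (f (E.resF x, E.resF y)) else 0

/-- The lift of `f : K × K → ℂ` at `(a₁,a₂),(n₁,n₂)`. -/
def liftAt₂ (f : K × K → ℂ) (a₁ a₂ : E.Fc) (n₁ n₂ : ℤ) : E.Fc → E.Fc → CX := fun z w =>
  E.lift0₂ f (E.t ^ (-n₁) * (z - a₁)) (E.t ^ (-n₂) * (w - a₂))

/-- The space `L(F)` of integrable functions on `F`: the `ℂ(X)`-span of the lifts
`f^{a,n}` of Haar integrable functions `f` on the residue field. -/
def LF [MeasurableSpace K] (μ : Measure K) : Submodule CX (E.Fc → CX) :=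
  Submodule.span CX
    {g : E.Fc → CX | ∃ f : K → ℂ, Integrable f μ ∧ ∃ (a : E.Fc) (n : ℤ), g = E.liftAt f a n}

/-- `Φ(x,y) = f⁰(x, y − t^R q(x))`. -/
def Phi (f : K × K → ℂ) (R : ℤ) (q : Polynomial E.O) : E.Fc → E.Fc → CX := fun x y =>
  E.lift0₂ f x (y - E.t ^ R * Polynomial.eval x (q.map E.O.subtype))

/-- The non-singular part `Φ_ns` of `Φ`: the restriction of `Φ` to `W_ns × F`,
extended by zero, where `W_ns = {x ∈ O : q̄′(x̄) ≠ 0}`. -/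
def PhiNS (f : K × K → ℂ) (R : ℤ) (q : Polynomial E.O) : E.Fc → E.Fc → CX := fun x y =>
  if x ∈ E.O ∧ Polynomial.eval (E.resF x) (Polynomial.derivative (q.map E.res)) ≠ 0 then
    E.Phi f R q x y else 0

/-- The singular part `Φ_sing` of `Φ`: the restriction of `Φ` to `W_sing × F`,
extended by zero, where `W_sing = {x ∈ O : q̄′(x̄) = 0}`. -/
def PhiSing (f : K × K → ℂ) (R : ℤ) (q : Polynomial E.O) : E.Fc → E.Fc → CX := fun x y =>
  if x ∈ E.O ∧ Polynomial.eval (E.resF x) (Polynomial.derivative (q.map E.res)) = 0 then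
    E.Phi f R q x y else 0

end CDVF

section Normed

variable {K : Type} [NontriviallyNormedField K]

/-- The absolute value `|α| = |res(α t^{−ν(α)})|_K ⬝ X^{ν(α)} ∈ ℂ(X)` of `α ∈ F^×`. -/
def CDVF.absF (E : CDVF K) (α : E.Fc) : CX :=
  algebraMap ℂ CX ((‖E.resF (α * E.t ^ (-E.ν α))‖ : ℝ) : ℂ) * RatFunc.X ^ E.ν α

/-- Schwartz–Bruhat functions on `K × K` (for nonarchimedean `K`: the locally constant
functions of compact support). -/
def IsSB (f : K × K → ℂ) : Prop := IsLocallyConstant f ∧ HasCompactSupport f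

variable [MeasurableSpace K] (μ : Measure K)

/-- A Haar integrable `f : K × K → ℂ` is Fubini: both repeated integrals exist and agree. -/
def KFubini (f : K × K → ℂ) : Prop :=
  Integrable f (μ.prod μ) ∧
  (∀ u : K, Integrable (fun v => f (u, v)) μ) ∧
  (∀ v : K, Integrable (fun u => f (u, v)) μ) ∧
  Integrable (fun u => ∫ v, f (u, v) ∂μ) μ ∧
  Integrable (fun v => ∫ u, f (u, v) ∂μ) μ ∧
  (∫ u, ∫ v, f (u, v) ∂μ ∂μ) = ∫ v, ∫ u, f (u, v) ∂μ ∂μ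

/-- `I` is the two-dimensional integral `∫^F` on `L(F)`: a `ℂ(X)`-linear functional which
lifts the Haar integral, is translation invariant, and is compatible with multiplicative
structure. -/
def CDVF.IsIntegralF (E : CDVF K) (I : (E.Fc → CX) →ₗ[CX] CX) : Prop :=
  (∀ f : K → ℂ, Integrable f μ → I (E.lift0 f) = algebraMap ℂ CX (∫ u, f u ∂μ)) ∧
  (∀ g ∈ E.LF μ, ∀ a : E.Fc, I (fun x => g (x + a)) = I g) ∧
  (∀ g ∈ E.LF μ, ∀ α : E.Fc, α ≠ 0 → I (fun x => g (α * x)) = (E.absF α)⁻¹ * I g)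

/-- A `ℂ(X)`-valued function on `F × F` is Fubini (with respect to the integral `I`):
all sections and repeated integrands are integrable and the two repeated integrals agree. -/
def CDVF.FFubini (E : CDVF K) (I : (E.Fc → CX) →ₗ[CX] CX) (g : E.Fc → E.Fc → CX) : Prop :=
  (∀ x : E.Fc, (fun y => g x y) ∈ E.LF μ) ∧
  ((fun x => I (fun y => g x y)) ∈ E.LF μ) ∧
  (∀ y : E.Fc, (fun x => g x y) ∈ E.LF μ) ∧
  ((fun y => I (fun x => g x y)) ∈ E.LF μ) ∧
  I (fun x => I (fun y => g x y)) = I (fun y => I (fun x => g x y))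

/-- The conclusion of the change-of-variables conjecture for the data
`a₁, a₂, n₁, n₂, h`: for every Schwartz–Bruhat `f` on `K × K`, with `g` the lift of `f` at
`(a₁,a₂),(n₁,n₂)`, the function `(x,y) ↦ g(x, y − h(x))` is Fubini on `F × F` with
repeated integral `∫∫ f du dv ⬝ X^{n₁+n₂}`. -/
def CDVF.ConjHolds (E : CDVF K) (I : (E.Fc → CX) →ₗ[CX] CX)
    (a₁ a₂ : E.Fc) (n₁ n₂ : ℤ) (h : Polynomial E.Fc) : Prop :=
  ∀ f : K × K → ℂ, IsSB f →
    E.FFubini μ I (fun x y => E.liftAt₂ f a₁ a₂ n₁ n₂ x (y - Polynomial.eval x h)) ∧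
    I (fun y => I (fun x => E.liftAt₂ f a₁ a₂ n₁ n₂ x (y - Polynomial.eval x h))) =
      algebraMap ℂ CX (∫ v, ∫ u, f (u, v) ∂μ ∂μ) * RatFunc.X ^ (n₁ + n₂)

end Normed

/-! ### Locally constant functions of compact support -/

theorem IsLocallyConstant.exists_uniform_radius {M Z : Type*} [PseudoMetricSpace M] [Zero Z]
    {f : M → Z} (hf : IsLocallyConstant f) (hc : HasCompactSupport f) :
    ∃ δ > 0, ∀ x y, dist x y < δ → f x = f y := by
  obtain ⟨δ, hδ, h⟩ := lebesgue_number_lemma_of_metric (c := fun z : Z => f ⁻¹' {z}) hc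
    (fun z => hf _) (fun x _ => Set.mem_iUnion.2 ⟨f x, rfl⟩)
  have key : ∀ x ∈ tsupport f, ∀ y, dist y x < δ → f x = f y := by
    intro x hx y hy
    obtain ⟨z, hz⟩ := h x hx
    have h1 : f x = z := hz (Metric.mem_ball_self hδ)
    have h2 : f y = z := hz hy
    rw [h1, h2]
  refine ⟨δ, hδ, fun x y hxy => ?_⟩
  by_cases hx : x ∈ tsupport f
  · exact key x hx y (by rwa [dist_comm])
  by_cases hy : y ∈ tsupport f
  · exact (key y hy x hxy).symm
  rw [image_eq_zero_of_notMem_tsupport hx, image_eq_zero_of_notMem_tsupport hy]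

theorem isLocallyConstant_of_uniform_radius {M Z : Type*} [PseudoMetricSpace M]
    {f : M → Z} {δ : ℝ} (hδ : 0 < δ) (h : ∀ x y, dist x y < δ → f x = f y) :
    IsLocallyConstant f := by
  rw [IsLocallyConstant.iff_eventually_eq]
  intro x
  filter_upwards [Metric.ball_mem_nhds x hδ] with y hy
  exact h y x hy

/-- A nonzero locally constant function of compact support has a nonzero period `a`. All the
multiples `n ^ k • a` are periods as well, and periods are bounded, so `‖n‖ ≤ 1` for every
natural number `n`. -/
theorem isUltrametricDist_of_isLocallyConstant {K : Type} [NontriviallyNormedField K]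
    {g : K → ℂ} (hg : IsLocallyConstant g) (hc : HasCompactSupport g) (h0 : g ≠ 0) :
    IsUltrametricDist K := by
  apply IsUltrametricDist.isUltrametricDist_of_forall_norm_natCast_le_one
  intro n
  by_contra! hn
  obtain ⟨δ, hδ, h⟩ := hg.exists_uniform_radius hc
  obtain ⟨a, ha0, ha⟩ := NormedField.exists_norm_lt K hδ
  obtain ⟨x, hx⟩ := Function.ne_iff.1 h0
  have hper : ∀ m : ℕ, g (x + m * a) = g x := by
    intro m
    induction m with
    | zero => simp
    | succ m ih =>
      rw [← ih]
      apply h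
      have e : x + ((m + 1 : ℕ) : K) * a - (x + m * a) = a := by
        push_cast
        ring
      rwa [dist_eq_norm, e]
  obtain ⟨C, hC⟩ := hc.isBounded.exists_norm_le
  have hb : ∀ k : ℕ, ‖(n : K)‖ ^ k * ‖a‖ ≤ C + ‖x‖ := by
    intro k
    have h1 : x + ((n ^ k : ℕ) : K) * a ∈ tsupport g := by
      apply subset_tsupport
      rw [Function.mem_support, hper]
      exact hx
    have h2 := hC _ h1
    have h3 := norm_sub_le (x + ((n ^ k : ℕ) : K) * a) x
    rw [add_sub_cancel_left, norm_mul, Nat.cast_pow, norm_pow] at h3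
    rw [Nat.cast_pow] at h2
    linarith
  obtain ⟨k, hk⟩ := pow_unbounded_of_one_lt ((C + ‖x‖) / ‖a‖) hn
  rw [div_lt_iff₀ ha0] at hk
  exact absurd (hb k) (not_le.2 hk)

/-! ### Change of variables along an étale polynomial over a local field -/

/-- The push-forward of `g` along the polynomial map `Q`: the sum of `g / ‖Q'‖` over the
fibres of `Q`. -/
def fibreSum {K : Type} [NontriviallyNormedField K] (Q : K[X]) (g : K → ℂ) (c : K) : ℂ :=
  ∑ ω ∈ (Q - C c).roots.toFinset, ((‖Q.derivative.eval ω‖ : ℝ) : ℂ)⁻¹ * g ω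

theorem mem_fibre {K : Type} [Field K] {Q : K[X]}
    (hQ : ∀ ω, Q.derivative.eval ω ≠ 0) (c ω : K) :
    ω ∈ (Q - C c).roots.toFinset ↔ Q.eval ω = c := by
  have hne : Q - C c ≠ 0 := by
    intro h
    apply hQ 0
    rw [sub_eq_zero.1 h]
    simp
  rw [Multiset.mem_toFinset, mem_roots hne]
  simp [sub_eq_zero]

/-- On `S` the polynomial map `Q` is close to a similarity of ratio `‖d‖`, and `‖Q'‖` and `g`
are constant. -/
def GoodOn {K : Type} [NontriviallyNormedField K] (Q : K[X]) (g : K → ℂ) (S : Set K) : Prop :=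
  ∃ d : K, d ≠ 0 ∧ ∀ x ∈ S, ‖Q.derivative.eval x‖ = ‖d‖ ∧
    ∀ y ∈ S, g x = g y ∧ ‖Q.eval x - Q.eval y - d * (x - y)‖ ≤ 1 / 2 * ‖d‖ * ‖x - y‖

section Ultrametric

variable {K : Type} [NontriviallyNormedField K] [IsUltrametricDist K]

theorem exists_goodOn {Q : K[X]} {g : K → ℂ} (hg : IsLocallyConstant g) {a : K}
    (ha : Q.derivative.eval a ≠ 0) : ∃ U, IsOpen U ∧ a ∈ U ∧ GoodOn Q g U := by
  have hpos := norm_pos_iff.2 ha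
  have h1 : ∀ᶠ p : K × K in nhds (a, a), ‖Q.eval p.1 - Q.eval p.2 -
      Q.derivative.eval a * (p.1 - p.2)‖ ≤ 1 / 2 * ‖Q.derivative.eval a‖ * ‖p.1 - p.2‖ := by
    have := (Q.hasStrictDerivAt a).isLittleO.def (c := 1 / 2 * ‖Q.derivative.eval a‖)
      (by positivity)
    filter_upwards [this] with p hp
    simpa [mul_comm] using hp
  have h2 : ∀ᶠ x in nhds a, ‖Q.derivative.eval x‖ = ‖Q.derivative.eval a‖ := by
    filter_upwards [Metric.continuousAt_iff'.1 Q.derivative.continuous.continuousAt _ hpos]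
      with x hx
    rw [dist_eq_norm] at hx
    have := IsUltrametricDist.norm_add_eq_max_of_norm_ne_norm hx.ne
    rw [sub_add_cancel, max_eq_right hx.le] at this
    exact this
  have h3 : ∀ᶠ x in nhds a, g x = g a := hg.eventually_eq a
  rw [nhds_prod_eq, Filter.eventually_prod_self_iff'] at h1
  obtain ⟨V, hV, hV'⟩ := h1
  obtain ⟨U, hU, hUo, haU⟩ := mem_nhds_iff.1 (Filter.inter_mem hV (h2.and h3))
  refine ⟨U, hUo, haU, _, ha, fun x hx => ⟨(hU hx).2.1, fun y hy => ⟨?_, ?_⟩⟩⟩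
  · exact (hU hx).2.2.trans (hU hy).2.2.symm
  · exact hV' x (hU hx).1 y (hU hy).1

theorem norm_sub_le_of_good {d A B : K} (h : ‖A - d * B‖ ≤ 1 / 2 * ‖d‖ * ‖B‖) :
    ‖A‖ ≤ ‖d‖ * ‖B‖ := by
  have := IsUltrametricDist.norm_add_le_max (A - d * B) (d * B)
  rw [sub_add_cancel, norm_mul] at this
  have h3 : 0 ≤ ‖d‖ * ‖B‖ := by positivity
  exact this.trans (max_le (by linarith) le_rfl)

/-- Newton's method: `x ↦ x - (Q x - c) / d` is a contraction of the ball, whose fixed point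
solves `Q x = c`. -/
theorem exists_eval_eq [CompleteSpace K] {Q : K[X]} {b d c : K} {r : ℝ} (hr : 0 ≤ r) (hd : d ≠ 0)
    (h : ∀ x ∈ Metric.closedBall b r, ∀ y ∈ Metric.closedBall b r,
      ‖Q.eval x - Q.eval y - d * (x - y)‖ ≤ 1 / 2 * ‖d‖ * ‖x - y‖)
    (hc : c ∈ Metric.closedBall (Q.eval b) (‖d‖ * r)) :
    ∃ x ∈ Metric.closedBall b r, Q.eval x = c := by
  have hdp := norm_pos_iff.2 hd
  have hb : b ∈ Metric.closedBall b r := Metric.mem_closedBall_self hr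
  let N : K → K := fun x => x - d⁻¹ * (Q.eval x - c)
  have hlip : ∀ x ∈ Metric.closedBall b r, ∀ y ∈ Metric.closedBall b r,
      ‖N x - N y‖ ≤ 1 / 2 * ‖x - y‖ := by
    intro x hx y hy
    have e : N x - N y = -(d⁻¹ * (Q.eval x - Q.eval y - d * (x - y))) := by
      simp only [N]
      field_simp
      ring
    rw [e, norm_neg, norm_mul, norm_inv, inv_mul_le_iff₀ hdp]
    linarith [h x hx y hy]
  have hNb : ‖N b - b‖ ≤ r := by
    have e : N b - b = d⁻¹ * (c - Q.eval b) := by simp only [N]; ring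
    rw [e, norm_mul, norm_inv, inv_mul_le_iff₀ hdp, ← dist_eq_norm]
    exact hc
  have hmaps : Set.MapsTo N (Metric.closedBall b r) (Metric.closedBall b r) := by
    intro x hx
    have h1 := hlip x hx b hb
    rw [Metric.mem_closedBall, dist_eq_norm] at hx ⊢
    have h2 := IsUltrametricDist.norm_add_le_max (N x - N b) (N b - b)
    rw [sub_add_sub_cancel] at h2
    exact h2.trans (max_le (by linarith [norm_nonneg (x - b)]) hNb)
  have hcontr : ContractingWith (1 / 2) (hmaps.restrict N _ _) := by
    refine ⟨by rw [← NNReal.coe_lt_coe]; norm_num, LipschitzWith.of_dist_le_mul ?_⟩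
    rintro ⟨x, hx⟩ ⟨y, hy⟩
    rw [Subtype.dist_eq, Subtype.dist_eq, dist_eq_norm, dist_eq_norm]
    simpa using hlip x hx y hy
  obtain ⟨x, hx, hfix, -⟩ := hcontr.exists_fixedPoint' Metric.isClosed_closedBall.isComplete
    hmaps hb (edist_ne_top _ _)
  refine ⟨x, hx, ?_⟩
  have h1 : x - d⁻¹ * (Q.eval x - c) = x := hfix
  have h2 : d⁻¹ * (Q.eval x - c) = 0 := by linear_combination -h1
  rcases mul_eq_zero.1 h2 with h3 | h3
  · exact absurd h3 (inv_ne_zero hd)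
  · exact sub_eq_zero.1 h3

/-- On a good ball `Q` is a bijection onto a ball of radius scaled by `‖Q'‖`. -/
theorem fibreSum_indicator [CompleteSpace K] {Q : K[X]} (hQ : ∀ ω, Q.derivative.eval ω ≠ 0)
    {g : K → ℂ} {b : K} {r : ℝ} (hr : 0 ≤ r) (hgood : GoodOn Q g (Metric.closedBall b r)) :
    fibreSum Q ((Metric.closedBall b r).indicator g) =
      (Metric.closedBall (Q.eval b) (‖Q.derivative.eval b‖ * r)).indicator
        (fun _ => ((‖Q.derivative.eval b‖ : ℝ) : ℂ)⁻¹ * g b) := by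
  obtain ⟨d, hd, hS⟩ := hgood
  have hb : b ∈ Metric.closedBall b r := Metric.mem_closedBall_self hr
  have hdp := norm_pos_iff.2 hd
  rw [(hS b hb).1]
  ext c
  unfold fibreSum
  by_cases hc : c ∈ Metric.closedBall (Q.eval b) (‖d‖ * r)
  · obtain ⟨x, hx, rfl⟩ := exists_eval_eq hr hd (fun x hx y hy => ((hS x hx).2 y hy).2) hc
    rw [Set.indicator_of_mem hc, Finset.sum_eq_single x]
    · rw [Set.indicator_of_mem hx, (hS x hx).1, ((hS x hx).2 b hb).1]
    · intro y hy hne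
      rw [mem_fibre hQ] at hy
      rw [Set.indicator_of_notMem, mul_zero]
      intro hyb
      have h1 := ((hS y hyb).2 x hx).2
      rw [hy, sub_self, zero_sub, norm_neg, norm_mul] at h1
      have h2 : 0 < ‖y - x‖ := norm_pos_iff.2 (sub_ne_zero.2 hne)
      have h3 : 0 < ‖d‖ * ‖y - x‖ := by positivity
      linarith
    · intro hx'
      exact absurd ((mem_fibre hQ _ _).2 rfl) hx'
  · rw [Set.indicator_of_notMem hc]
    apply Finset.sum_eq_zero
    intro y hy
    rw [mem_fibre hQ] at hy
    rw [Set.indicator_of_notMem, mul_zero]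
    intro hyb
    apply hc
    have h1 := norm_sub_le_of_good ((hS y hyb).2 b hb).2
    rw [hy, ← dist_eq_norm, ← dist_eq_norm] at h1
    exact h1.trans (mul_le_mul_of_nonneg_left hyb hdp.le)

/-- In an ultrametric space balls of equal radius are equal or disjoint, so a finite cover of the
support by such balls is a partition. -/
theorem exists_ball_partition {g : K → ℂ} (hc : HasCompactSupport g) {r : ℝ} (hr : 0 < r) :
    ∃ 𝓑 : Finset (Set K), (∀ B ∈ 𝓑, ∃ b ∈ tsupport g, B = Metric.closedBall b r) ∧
      g = ∑ B ∈ 𝓑, B.indicator g := by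
  obtain ⟨s, hs, hfin, hcov⟩ := finite_cover_balls_of_compact (s := tsupport g) hc hr
  refine ⟨hfin.toFinset.image (fun b => Metric.closedBall b r), ?_, ?_⟩
  · intro B hB
    obtain ⟨b, hb, rfl⟩ := Finset.mem_image.1 hB
    exact ⟨b, hs (hfin.mem_toFinset.1 hb), rfl⟩
  · ext x
    rw [Finset.sum_apply]
    by_cases hx : x ∈ tsupport g
    · obtain ⟨b, hb, hxb⟩ := Set.mem_iUnion₂.1 (hcov hx)
      have hxb' := Metric.ball_subset_closedBall hxb
      rw [Finset.sum_eq_single (Metric.closedBall b r), Set.indicator_of_mem hxb']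
      · intro B hB hne
        obtain ⟨b', -, rfl⟩ := Finset.mem_image.1 hB
        rw [Set.indicator_of_notMem]
        intro hx'
        rcases IsUltrametricDist.closedBall_eq_or_disjoint b' b r with h | h
        · exact hne h
        · exact Set.disjoint_left.1 h hx' hxb'
      · intro h
        exact absurd (Finset.mem_image_of_mem _ (hfin.mem_toFinset.2 hb)) h
    · have h0 := image_eq_zero_of_notMem_tsupport hx
      rw [h0]
      refine (Finset.sum_eq_zero fun B _ => ?_).symm
      rw [Set.indicator_apply_eq_zero]
      exact fun _ => h0

end Ultrametric

theorem fibreSum_sum {K ι : Type} [NontriviallyNormedField K] (Q : K[X]) (s : Finset ι)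
    (g : ι → K → ℂ) : fibreSum Q (∑ i ∈ s, g i) = ∑ i ∈ s, fibreSum Q (g i) := by
  ext c
  simp only [fibreSum, Finset.sum_apply, Finset.mul_sum]
  exact Finset.sum_comm

/-- Change of variables for an étale polynomial map: the push-forward has the same integral. -/
theorem integral_fibreSum {K : Type} [NontriviallyNormedField K] [MeasurableSpace K] [BorelSpace K]
    [LocallyCompactSpace K] (μ : Measure K) [Measure.IsAddHaarMeasure μ]
    (hscale : ∀ (f : K → ℂ) (a : K), a ≠ 0 → Integrable f μ → Integrable (fun u => f (a * u)) μ →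
      ∫ u, f (a * u) ∂μ = ((‖a‖ : ℝ) : ℂ)⁻¹ * ∫ u, f u ∂μ)
    {Q : K[X]} (hQ : ∀ ω, Q.derivative.eval ω ≠ 0)
    {g : K → ℂ} (hg : IsLocallyConstant g) (hc : HasCompactSupport g) :
    Integrable (fibreSum Q g) μ ∧ ∫ c, fibreSum Q g c ∂μ = ∫ u, g u ∂μ := by
  by_cases h0 : g = 0
  · subst h0
    have : fibreSum Q (0 : K → ℂ) = 0 := by ext c; simp [fibreSum]
    rw [this]
    exact ⟨integrable_zero _ _ _, rfl⟩
  have := isUltrametricDist_of_isLocallyConstant hg hc h0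
  have : ProperSpace K := ProperSpace.of_locallyCompactSpace K
  choose U hUo hU hgood using fun a : K => exists_goodOn hg (hQ a)
  obtain ⟨δ, hδ, hleb⟩ := lebesgue_number_lemma_of_metric (s := tsupport g) (c := U) hc hUo
    (fun a _ => Set.mem_iUnion.2 ⟨a, hU a⟩)
  have hr : 0 < δ / 2 := half_pos hδ
  obtain ⟨𝓑, h𝓑, hsum⟩ := exists_ball_partition hc hr
  have hint : ∀ (b : K) (r : ℝ) (z : ℂ),
      Integrable ((Metric.closedBall b r).indicator (fun _ => z)) μ := fun b r z =>
    (integrable_indicator_iff Metric.isClosed_closedBall.measurableSet).2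
      (integrableOn_const (isCompact_closedBall b r).measure_lt_top.ne)
  -- A ball of radius `‖d‖ * r` has `‖d‖` times the volume of a ball of radius `r`.
  have hvol : ∀ (b b' d : K) (r : ℝ) (z : ℂ), d ≠ 0 →
      ∫ u, (Metric.closedBall b' (‖d‖ * r)).indicator (fun _ => z) u ∂μ =
        ((‖d‖ : ℝ) : ℂ) * ∫ u, (Metric.closedBall b r).indicator (fun _ => z) u ∂μ := by
    intro b b' d r z hd
    have hdp := norm_pos_iff.2 hd
    have e0 : (fun u => (Metric.closedBall (0 : K) (‖d‖ * r)).indicator (fun _ => z) (d * u)) =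
        (Metric.closedBall 0 r).indicator (fun _ => z) := by
      ext u
      simp [Set.indicator_apply, hdp]
    have h1 := hscale _ d hd (hint 0 (‖d‖ * r) z) (e0 ▸ hint 0 r z)
    have e1 : (fun u => (Metric.closedBall (0 : K) (‖d‖ * r)).indicator (fun _ => z) (d * u)) =
        fun u => (Metric.closedBall b r).indicator (fun _ => z) (u + b) := by
      ext u
      simp [Set.indicator_apply, hdp, dist_eq_norm]
    have e2 : (Metric.closedBall (0 : K) (‖d‖ * r)).indicator (fun _ => z) =
        fun u => (Metric.closedBall b' (‖d‖ * r)).indicator (fun _ => z) (u + b') := by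
      ext u
      simp [Set.indicator_apply, dist_eq_norm]
    rw [e1, e2, integral_add_right_eq_self (fun u => (Metric.closedBall b r).indicator _ u),
      integral_add_right_eq_self (fun u => (Metric.closedBall b' _).indicator _ u)] at h1
    rw [h1, mul_inv_cancel_left₀]
    exact_mod_cast hdp.ne'
  have hB : ∀ B ∈ 𝓑, Integrable (B.indicator g) μ ∧ Integrable (fibreSum Q (B.indicator g)) μ ∧
      ∫ c, fibreSum Q (B.indicator g) c ∂μ = ∫ u, B.indicator g u ∂μ := by
    intro B hB
    obtain ⟨b, hb, rfl⟩ := h𝓑 B hB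
    obtain ⟨a, ha⟩ := hleb b hb
    have hsub : Metric.closedBall b (δ / 2) ⊆ U a :=
      (Metric.closedBall_subset_ball (half_lt_self hδ)).trans ha
    have hgB : GoodOn Q g (Metric.closedBall b (δ / 2)) := by
      obtain ⟨d, hd, h⟩ := hgood a
      exact ⟨d, hd, fun x hx => ⟨(h x (hsub hx)).1, fun y hy => (h x (hsub hx)).2 y (hsub hy)⟩⟩
    have eg : (Metric.closedBall b (δ / 2)).indicator g =
        (Metric.closedBall b (δ / 2)).indicator (fun _ => g b) := by
      obtain ⟨d, hd, h⟩ := hgB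
      ext x
      by_cases hx : x ∈ Metric.closedBall b (δ / 2)
      · rw [Set.indicator_of_mem hx, Set.indicator_of_mem hx]
        exact ((h x hx).2 b (Metric.mem_closedBall_self hr.le)).1
      · rw [Set.indicator_of_notMem hx, Set.indicator_of_notMem hx]
    rw [fibreSum_indicator hQ hr.le hgB, eg]
    refine ⟨hint _ _ _, hint _ _ _, ?_⟩
    rw [hvol b _ _ _ _ (hQ b), ← integral_const_mul]
    congr 1
    ext u
    have hne : ((‖Q.derivative.eval b‖ : ℝ) : ℂ) ≠ 0 := by
      exact_mod_cast (norm_pos_iff.2 (hQ b)).ne'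
    by_cases hu : u ∈ Metric.closedBall b (δ / 2)
    · rw [Set.indicator_of_mem hu, Set.indicator_of_mem hu, mul_inv_cancel_left₀ hne]
    · rw [Set.indicator_of_notMem hu, Set.indicator_of_notMem hu, mul_zero]
  have e1 : fibreSum Q g = ∑ B ∈ 𝓑, fibreSum Q (B.indicator g) := by
    conv_lhs => rw [hsum]
    exact fibreSum_sum _ _ _
  constructor
  · rw [e1]
    exact integrable_finsetSum' _ fun B h => (hB B h).2.1
  · conv_rhs => rw [hsum]
    rw [e1]
    simp only [Finset.sum_apply]
    rw [integral_finsetSum _ fun B h => (hB B h).2.1, integral_finsetSum _ fun B h => (hB B h).1]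
    exact Finset.sum_congr rfl fun B h => (hB B h).2.2
/-! ### Arithmetic of the ring of integers -/

namespace CDVF

section Arithmetic

variable {K : Type} [Field K] (E : CDVF K)

/-- The prime element as an element of the ring of integers. -/
def tO : E.O := ⟨E.t, E.ht⟩

@[simp] theorem coe_tO : (E.tO : E.Fc) = E.t := rfl

theorem t_ne_zero : E.t ≠ 0 := fun h => E.hirr.ne_zero (Subtype.ext h)

@[simp] theorem res_tO : E.res E.tO = 0 := (E.hres_ker _).2 (dvd_refl _)

@[simp] theorem resF_coe (x : E.O) : E.resF x = E.res x := by
  simp [resF]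

theorem lift0_coe (f : K → ℂ) (x : E.O) : E.lift0 f x = algebraMap ℂ CX (f (E.res x)) := by
  simp [lift0]

theorem lift0_of_notMem (f : K → ℂ) {x : E.Fc} (hx : x ∉ E.O) : E.lift0 f x = 0 := by
  simp [lift0, hx]

theorem lift0_eq_liftAt (f : K → ℂ) : E.lift0 f = E.liftAt f 0 0 := by
  ext1 x
  simp [liftAt]

/-- A relation `u t^m = v t^n` with `m < n` forces `t ∣ u`. -/
theorem not_lt_of_mul_zpow_eq {u v : E.O} (hu : E.res u ≠ 0) {m n : ℤ}
    (h : (u : E.Fc) * E.t ^ m = v * E.t ^ n) : ¬ m < n := by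
  intro hmn
  obtain ⟨k, rfl⟩ := Int.le.dest (Int.add_one_le_of_lt hmn)
  have ht := E.t_ne_zero
  have h1 : u = v * (E.tO * E.tO ^ k) := by
    apply Subtype.ext
    push_cast
    rw [coe_tO]
    rw [zpow_add₀ ht, zpow_add₀ ht, zpow_natCast, zpow_one] at h
    apply mul_right_cancel₀ (zpow_ne_zero m ht)
    rw [h]
    ring
  apply hu
  rw [h1]
  simp

theorem zpow_exponent_unique {u v : E.O} (hu : E.res u ≠ 0) (hv : E.res v ≠ 0) {m n : ℤ}
    (h : (u : E.Fc) * E.t ^ m = v * E.t ^ n) : m = n :=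
  le_antisymm (not_lt.1 (E.not_lt_of_mul_zpow_eq hv h.symm)) (not_lt.1 (E.not_lt_of_mul_zpow_eq hu h))

theorem coe_ne_zero_of_res {u : E.O} (hu : E.res u ≠ 0) : (u : E.Fc) ≠ 0 := by
  rintro h
  apply hu
  rw [show u = 0 from Subtype.ext h, map_zero]

theorem ν_mul_zpow {u : E.O} (hu : E.res u ≠ 0) (n : ℤ) : E.ν (u * E.t ^ n) = n := by
  have hne := mul_ne_zero (E.coe_ne_zero_of_res hu) (zpow_ne_zero n E.t_ne_zero)
  obtain ⟨v, hv, h⟩ := E.hν _ hne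
  exact (E.zpow_exponent_unique hu (hv.map E.res).ne_zero h).symm

theorem inv_mem_of_res {u : E.O} (hu : E.res u ≠ 0) : (u : E.Fc)⁻¹ ∈ E.O := by
  obtain ⟨v, hv, h⟩ := E.hν _ (E.coe_ne_zero_of_res hu)
  have h0 := E.ν_mul_zpow hu 0
  rw [zpow_zero, mul_one] at h0
  rw [h0, zpow_zero, mul_one] at h
  obtain ⟨w, hw⟩ := isUnit_iff_exists_inv.1 hv
  have hw' : (v : E.Fc) * w = 1 := congrArg Subtype.val hw
  rw [h, inv_eq_of_mul_eq_one_right hw']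
  exact w.2

theorem res_eval (q : Polynomial E.O) (x : E.O) :
    E.res (q.eval x) = (q.map E.res).eval (E.res x) := by
  rw [eval_map, eval₂_at_apply]

theorem eval_coe (q : Polynomial E.O) (x : E.O) :
    (q.map E.O.subtype).eval (x : E.Fc) = (q.eval x : E.O) := by
  rw [eval_map]
  exact eval₂_at_apply E.O.subtype x

/-- Hensel's lemma to finite precision: a simple root of `q̄ = z̄` lifts to a solution of `q = z`
modulo `t ^ (n + 1)`. -/
theorem exists_approx_root (q : Polynomial E.O) (z : E.O) {ω : K}
    (hω : (q.map E.res).eval ω = E.res z) (hω' : (q.map E.res).derivative.eval ω ≠ 0) (n : ℕ) :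
    ∃ x m : E.O, E.res x = ω ∧ q.eval x - z = E.tO ^ (n + 1) * m := by
  induction n with
  | zero =>
    obtain ⟨x, rfl⟩ := E.hres_surj ω
    have h : E.res (q.eval x - z) = 0 := by
      rw [map_sub, res_eval, hω, sub_self]
    obtain ⟨m, hm⟩ := (E.hres_ker _).1 h
    exact ⟨x, m, rfl, by rw [zero_add, pow_one]; exact hm⟩
  | succ n ih =>
    obtain ⟨x, m, rfl, hm⟩ := ih
    obtain ⟨s, hs⟩ := E.hres_surj (-E.res m / (q.map E.res).derivative.eval (E.res x))
    obtain ⟨k, hk⟩ := q.binomExpansion x (E.tO ^ (n + 1) * s)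
    have h : E.res (m + q.derivative.eval x * s + k * E.tO ^ (n + 1) * s ^ 2) = 0 := by
      have hd : E.res (q.derivative.eval x) = (q.map E.res).derivative.eval (E.res x) := by
        rw [res_eval, derivative_map]
      simp only [map_add, map_mul, hs, hd, map_pow, res_tO]
      field_simp
      ring
    obtain ⟨m', hm'⟩ := (E.hres_ker _).1 h
    refine ⟨x + E.tO ^ (n + 1) * s, m', by simp, ?_⟩
    have hm'' : m + q.derivative.eval x * s + k * E.tO ^ (n + 1) * s ^ 2 = E.tO * m' := hm'
    rw [hk]
    linear_combination hm + E.tO ^ (n + 1) * hm''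

theorem Phi_of_notMem (f : K × K → ℂ) (R : ℤ) (q : Polynomial E.O) {x : E.Fc} (hx : x ∉ E.O)
    (y : E.Fc) : E.Phi f R q x y = 0 := by
  simp [Phi, lift0₂, hx]

theorem Phi_coe_left (f : K × K → ℂ) (R : ℤ) (q : Polynomial E.O) (x : E.O) :
    (fun y => E.Phi f R q x y) =
      E.liftAt (fun v => f (E.res x, v)) (E.t ^ R * (q.eval x : E.O)) 0 := by
  ext1 y
  simp [Phi, lift0₂, liftAt, lift0, eval_coe]

/-- If `x` and the approximate solution `x₀` of `q = z` have the same residue, then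
`t^{-r}(z - q(x))` is integral exactly when `s = t^{-r}(x - x₀)` is, and then its residue is
`-q̄'(x̄₀) s̄`. -/
theorem Phi_eq_liftAt (f : K × K → ℂ) (r : ℕ) (q : Polynomial E.O) {x x₀ z m : E.O}
    (hres : E.res x = E.res x₀) (hx₀ : q.eval x₀ - z = E.tO ^ (r + 1) * m)
    (hd : (q.map E.res).derivative.eval (E.res x₀) ≠ 0) :
    E.Phi f (-r) q x (E.t ^ (-r : ℤ) * z) =
      E.liftAt (fun v => f (E.res x₀, -(q.map E.res).derivative.eval (E.res x₀) * v)) x₀ r x := by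
  have ht := E.t_ne_zero
  obtain ⟨k, hk⟩ := q.binomExpansion x₀ (x - x₀)
  rw [add_sub_cancel] at hk
  set U : E.O := q.derivative.eval x₀ + k * (x - x₀) with hU
  have hUres : E.res U = (q.map E.res).derivative.eval (E.res x₀) := by
    rw [hU, map_add, map_mul, map_sub, hres, sub_self, mul_zero, add_zero, res_eval, derivative_map]
  have hU0 : E.res U ≠ 0 := hUres ▸ hd
  have hUne := E.coe_ne_zero_of_res hU0
  have hUinv := E.inv_mem_of_res hU0
  have hq : z - q.eval x = -(E.tO ^ (r + 1) * m) - (x - x₀) * U := by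
    rw [hU]
    linear_combination -hk - hx₀
  have hqF : (z : E.Fc) - (q.eval x : E.O) = -(E.t ^ (r + 1) * m) - (x - x₀) * U := by
    have := congrArg (Subtype.val) hq
    push_cast at this
    exact this
  set s : E.Fc := E.t ^ (-r : ℤ) * (x - x₀) with hs
  have hw : E.t ^ (-r : ℤ) * (z : E.Fc) - E.t ^ (-r : ℤ) * (q.eval x : E.O) =
      -(E.t * m) - s * U := by
    rw [← mul_sub, hqF, hs, mul_sub, zpow_neg, zpow_natCast, pow_succ]
    field_simp
  simp only [Phi, liftAt, lift0₂, lift0, eval_coe]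
  rw [hw, ← hs]
  by_cases hsO : s ∈ E.O
  · have e : -(E.t * m) - s * U = ((-(E.tO * m) - ⟨s, hsO⟩ * U : E.O) : E.Fc) := by
      push_cast
      rfl
    have e' : E.resF s = E.res ⟨s, hsO⟩ := E.resF_coe ⟨s, hsO⟩
    rw [if_pos hsO, e, if_pos ⟨x.2, Subtype.property _⟩, resF_coe, resF_coe, e', hres]
    simp only [map_sub, map_neg, map_mul, res_tO, hUres, zero_mul, neg_zero, zero_sub]
    rw [neg_mul, mul_comm]
  · rw [if_neg hsO, if_neg]
    rintro ⟨-, hwO⟩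
    apply hsO
    have e : s = -((-(E.t * m) - s * U) + E.t * m) * (U : E.Fc)⁻¹ := by
      field_simp
      ring
    rw [e]
    exact E.O.mul_mem (E.O.neg_mem (E.O.add_mem hwO (E.O.mul_mem E.ht m.2))) hUinv

/-- The support condition forces `q(x) ≡ t^r y` modulo `t^r`, so that for `r ≥ 1` the function
`Φ(·, y)` lives near the finitely many solutions of `q̄ = z̄`. -/
theorem Phi_section_of_mem (f : K × K → ℂ) {r : ℕ} (hr : 1 ≤ r) (q : Polynomial E.O)
    (hq' : ∀ ω, (q.map E.res).derivative.eval ω ≠ 0) (z : E.O) (S : Finset K)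
    (hS : ∀ ω, ω ∈ S ↔ (q.map E.res).eval ω = E.res z) :
    ∃ x₀ : K → E.O, (fun x => E.Phi f (-r) q x (E.t ^ (-r : ℤ) * z)) =
      ∑ ω ∈ S, E.liftAt (fun v => f (ω, -(q.map E.res).derivative.eval ω * v)) (x₀ ω) r := by
  have ht := E.t_ne_zero
  have hroot : ∀ ω, ∃ x₀ : E.O, ω ∈ S →
      E.res x₀ = ω ∧ ∃ m, q.eval x₀ - z = E.tO ^ (r + 1) * m := by
    intro ω
    by_cases hω : ω ∈ S
    · obtain ⟨x, m, h1, h2⟩ := E.exists_approx_root q z ((hS ω).1 hω) (hq' ω) r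
      exact ⟨x, fun _ => ⟨h1, m, h2⟩⟩
    · exact ⟨0, fun h => absurd h hω⟩
  choose x₀ hx₀ using hroot
  refine ⟨x₀, ?_⟩
  obtain ⟨r', rfl⟩ := Nat.exists_eq_add_of_le' hr
  ext1 x
  rw [Finset.sum_apply]
  -- A term of the sum is nonzero only at integral `x` with residue `ω`.
  have hterm : ∀ ω ∈ S, ∀ g : K → ℂ, E.liftAt g (x₀ ω) (r' + 1 : ℕ) x ≠ 0 →
      ∃ w : E.O, x = w ∧ E.res w = ω := by
    intro ω hω g hne
    by_cases hO : E.t ^ (-((r' + 1 : ℕ) : ℤ)) * (x - x₀ ω) ∈ E.O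
    · refine ⟨x₀ ω + E.tO ^ (r' + 1) * ⟨_, hO⟩, ?_, ?_⟩
      · push_cast
        rw [coe_tO, zpow_neg, ← Nat.cast_succ, zpow_natCast]
        field_simp
        ring
      · simp [(hx₀ ω hω).1]
    · exact absurd (E.lift0_of_notMem g hO) hne
  by_cases hx : x ∈ E.O
  · lift x to E.O using hx
    by_cases hω : E.res x ∈ S
    · obtain ⟨h1, m, h2⟩ := hx₀ _ hω
      rw [Finset.sum_eq_single (E.res x)]
      · rw [E.Phi_eq_liftAt f (r' + 1) q h1.symm h2 (hq' _), h1]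
      · intro ω hωS hne
        by_contra hne'
        obtain ⟨w, hw, rfl⟩ := hterm ω hωS _ hne'
        exact hne (congrArg E.res (Subtype.ext hw)).symm
      · intro h
        exact absurd hω h
    · rw [Finset.sum_eq_zero]
      · simp only [Phi, lift0₂]
        rw [if_neg]
        rintro ⟨-, hO⟩
        apply hω
        rw [hS, ← res_eval]
        rw [eval_coe] at hO
        have e : z - q.eval x = E.tO * (E.tO ^ r' * ⟨_, hO⟩) := by
          apply Subtype.ext
          push_cast
          rw [coe_tO, zpow_neg, ← Nat.cast_succ, zpow_natCast]
          field_simp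
          rw [Nat.succ_eq_add_one, pow_succ]
          ring
        have h0 : E.res (z - q.eval x) = 0 := (E.hres_ker _).2 ⟨_, e⟩
        rw [map_sub, sub_eq_zero] at h0
        exact h0.symm
      · intro ω hωS
        by_contra hne'
        obtain ⟨w, hw, rfl⟩ := hterm ω hωS _ hne'
        rw [Subtype.ext hw] at hω
        exact hω hωS
  · rw [E.Phi_of_notMem f _ q hx, Finset.sum_eq_zero]
    intro ω hωS
    by_contra hne'
    obtain ⟨w, hw, -⟩ := hterm ω hωS _ hne'
    exact hx (hw ▸ w.2)

theorem Phi_section_of_notMem (f : K × K → ℂ) (r : ℕ) (q : Polynomial E.O) {y : E.Fc}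
    (hy : E.t ^ r * y ∉ E.O) (x : E.Fc) : E.Phi f (-r) q x y = 0 := by
  have ht := E.t_ne_zero
  simp only [Phi, lift0₂]
  rw [if_neg]
  rintro ⟨hx, hO⟩
  apply hy
  lift x to E.O using hx
  rw [eval_coe] at hO
  have e : E.t ^ r * y = E.t ^ r * (y - E.t ^ (-r : ℤ) * (q.eval x : E.O)) + (q.eval x : E.O) := by
    rw [zpow_neg, zpow_natCast]
    field_simp
    ring
  rw [e]
  exact E.O.add_mem (E.O.mul_mem (E.O.pow_mem E.ht r) hO) (Subtype.property _)

end Arithmetic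

/-! ### The integral of a lift -/

section Integral

theorem absF_mul_zpow {K : Type} [NontriviallyNormedField K] (E : CDVF K) {u : E.O} (hu : E.res u ≠ 0) (n : ℤ) :
    E.absF (u * E.t ^ n) = algebraMap ℂ CX ((‖E.res u‖ : ℝ) : ℂ) * RatFunc.X ^ n := by
  rw [absF, E.ν_mul_zpow hu, mul_assoc, ← zpow_add₀ E.t_ne_zero, add_neg_cancel, zpow_zero,
    mul_one, resF_coe]

variable {K : Type} [NontriviallyNormedField K] [MeasurableSpace K] {μ : Measure K} (E : CDVF K)

theorem liftAt_mem {f : K → ℂ} (hf : Integrable f μ) (a : E.Fc) (n : ℤ) :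
    E.liftAt f a n ∈ E.LF μ :=
  Submodule.subset_span ⟨f, hf, a, n, rfl⟩

theorem lift0_mem {f : K → ℂ} (hf : Integrable f μ) : E.lift0 f ∈ E.LF μ :=
  E.lift0_eq_liftAt f ▸ E.liftAt_mem hf 0 0

variable {E} {I : (E.Fc → CX) →ₗ[CX] CX}

theorem IsIntegralF.liftAt (hI : E.IsIntegralF μ I) {f : K → ℂ} (hf : Integrable f μ)
    (a : E.Fc) (n : ℤ) :
    I (E.liftAt f a n) = RatFunc.X ^ n * algebraMap ℂ CX (∫ u, f u ∂μ) := by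
  have h1 : E.liftAt f a n = fun x => E.liftAt f 0 n (x + -a) := by
    ext1 x
    simp [CDVF.liftAt, sub_eq_add_neg]
  have h2 : E.liftAt f 0 n = fun x => E.lift0 f (E.t ^ (-n) * x) := by
    ext1 x
    simp [CDVF.liftAt]
  have h3 : E.absF (E.t ^ (-n)) = RatFunc.X ^ (-n) := by
    have := E.absF_mul_zpow (u := 1) (by simp) (-n)
    simpa using this
  rw [h1, hI.2.1 _ (E.liftAt_mem hf 0 n), h2,
    hI.2.2 _ (E.lift0_mem hf) _ (zpow_ne_zero _ E.t_ne_zero), h3, hI.1 f hf, zpow_neg, inv_inv]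

/-- Compatibility of `∫^F` with units of the ring of integers makes `‖·‖` the normalised absolute
value of `K`, i.e. the one that scales Haar measure. -/
theorem IsIntegralF.integral_comp_mul (hI : E.IsIntegralF μ I) (f : K → ℂ) (a : K) (ha : a ≠ 0)
    (hf : Integrable f μ) (hfa : Integrable (fun u => f (a * u)) μ) :
    ∫ u, f (a * u) ∂μ = ((‖a‖ : ℝ) : ℂ)⁻¹ * ∫ u, f u ∂μ := by
  obtain ⟨α, rfl⟩ := E.hres_surj a
  have hne := E.coe_ne_zero_of_res ha
  have h1 := hI.2.2 _ (E.lift0_mem hf) α hne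
  have h2 : (fun x => E.lift0 f (α * x)) = E.lift0 (fun u => f (E.res α * u)) := by
    ext1 x
    by_cases hx : x ∈ E.O
    · lift x to E.O using hx
      have : (α : E.Fc) * x = ((α * x : E.O) : E.Fc) := rfl
      rw [this, lift0_coe, lift0_coe, map_mul]
    · rw [E.lift0_of_notMem _ hx, E.lift0_of_notMem]
      intro h
      apply hx
      rw [← inv_mul_cancel_left₀ hne x]
      exact E.O.mul_mem (E.inv_mem_of_res ha) h
  have h3 : E.absF α = algebraMap ℂ CX ((‖E.res α‖ : ℝ) : ℂ) := by
    have := E.absF_mul_zpow ha 0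
    simpa using this
  rw [h2, hI.1 _ hfa, h3, hI.1 f hf, ← map_inv₀, ← map_mul] at h1
  exact (algebraMap ℂ CX).injective h1

end Integral

end CDVF

/-! ### Slices of Schwartz–Bruhat functions -/

section Slices

variable {K : Type} [NontriviallyNormedField K] [MeasurableSpace K] {μ : Measure K}

theorem IsSB.isLocallyConstant_integral {f : K × K → ℂ} (hf : IsSB f) :
    IsLocallyConstant (fun u => ∫ v, f (u, v) ∂μ) := by
  obtain ⟨δ, hδ, h⟩ := hf.1.exists_uniform_radius hf.2
  refine isLocallyConstant_of_uniform_radius hδ fun x y hxy => ?_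
  congr 1
  ext v
  apply h
  simpa [Prod.dist_eq, hδ] using hxy

theorem IsSB.hasCompactSupport_integral {f : K × K → ℂ} (hf : IsSB f) :
    HasCompactSupport (fun u => ∫ v, f (u, v) ∂μ) := by
  apply HasCompactSupport.intro (hf.2.isCompact.image continuous_fst)
  intro u hu
  have : ∀ v, f (u, v) = 0 := by
    intro v
    by_contra hne
    exact hu ⟨(u, v), subset_tsupport _ hne, rfl⟩
  simp [this]

variable [BorelSpace K] [IsFiniteMeasureOnCompacts μ]

theorem IsSB.integrable_slice_comp {f : K × K → ℂ} (hf : IsSB f) (u : K) {a : K} (ha : a ≠ 0) :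
    Integrable (fun v => f (u, a * v)) μ := by
  apply Continuous.integrable_of_hasCompactSupport
  · have := hf.1.continuous
    fun_prop
  · apply HasCompactSupport.intro (hf.2.isCompact.image (f := fun p : K × K => a⁻¹ * p.2)
      (by fun_prop))
    intro v hv
    by_contra hne
    refine hv ⟨(u, a * v), subset_tsupport _ hne, ?_⟩
    exact inv_mul_cancel_left₀ ha v

theorem IsSB.integrable_slice {f : K × K → ℂ} (hf : IsSB f) (u : K) :
    Integrable (fun v => f (u, v)) μ := by
  simpa using hf.integrable_slice_comp (μ := μ) u one_ne_zero

end Slices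

/-- If q̄′ vanishes nowhere on K, then Φ is Fubini on F×F. -/
theorem statement13 {K : Type} [NontriviallyNormedField K] [MeasurableSpace K] [BorelSpace K]
    [LocallyCompactSpace K] (μ : Measure K) [Measure.IsAddHaarMeasure μ]
    (E : CDVF K) (I : (E.Fc → CX) →ₗ[CX] CX) (hI : E.IsIntegralF μ I)
    (R : ℤ) (hR : R < 0) (q : Polynomial E.O) (hq0 : q.coeff 0 = 0)
    (hqbar : q.map E.res ≠ 0) (f : K × K → ℂ) (hf : IsSB f)
    (hq' : ∀ ω : K, Polynomial.eval ω (Polynomial.derivative (q.map E.res)) ≠ 0) :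
    E.FFubini μ I (E.Phi f R q) := by
  obtain ⟨r, rfl⟩ : ∃ r : ℕ, R = -(r : ℤ) := ⟨R.natAbs, by omega⟩
  have hr : 1 ≤ r := by omega
  have ht := E.t_ne_zero
  set g : K → ℂ := fun u => ∫ v, f (u, v) ∂μ with hg
  have hgc : HasCompactSupport g := hf.hasCompactSupport_integral
  have hgl : IsLocallyConstant g := hf.isLocallyConstant_integral
  have hgi : Integrable g μ := hgl.continuous.integrable_of_hasCompactSupport hgc
  set Q := q.map E.res with hQ
  obtain ⟨hGi, hG⟩ := integral_fibreSum μ hI.integral_comp_mul hq' hgl hgc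
  have hscaled : ∀ ω : K, Integrable (fun v => f (ω, -Q.derivative.eval ω * v)) μ := fun ω =>
    hf.integrable_slice_comp ω (neg_ne_zero.2 (hq' ω))
  have hx_mem : ∀ x, (fun y => E.Phi f (-r) q x y) ∈ E.LF μ := by
    intro x
    by_cases hx : x ∈ E.O
    · lift x to E.O using hx
      rw [E.Phi_coe_left]
      exact E.liftAt_mem (hf.integrable_slice _) _ _
    · simp only [E.Phi_of_notMem f _ q hx]
      exact Submodule.zero_mem _
  have hx_int : (fun x => I (fun y => E.Phi f (-r) q x y)) = E.lift0 g := by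
    ext1 x
    by_cases hx : x ∈ E.O
    · lift x to E.O using hx
      rw [E.Phi_coe_left, hI.liftAt (hf.integrable_slice _), E.lift0_coe, zpow_zero, one_mul]
    · simp only [E.Phi_of_notMem f _ q hx]
      rw [E.lift0_of_notMem g hx]
      exact map_zero I
  have hy_all : ∀ y, (fun x => E.Phi f (-r) q x y) ∈ E.LF μ ∧
      I (fun x => E.Phi f (-r) q x y) =
        RatFunc.X ^ (r : ℤ) * E.liftAt (fibreSum Q g) 0 (-r) y := by
    intro y
    have hlift : E.liftAt (fibreSum Q g) 0 (-r) y = E.lift0 (fibreSum Q g) (E.t ^ r * y) := by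
      simp [CDVF.liftAt]
    rw [hlift]
    by_cases hy : E.t ^ r * y ∈ E.O
    · obtain ⟨z, hz⟩ : ∃ z : E.O, (z : E.Fc) = E.t ^ r * y := ⟨⟨_, hy⟩, rfl⟩
      have hyz : y = E.t ^ (-r : ℤ) * z := by
        rw [hz, zpow_neg, zpow_natCast, inv_mul_cancel_left₀ (pow_ne_zero _ ht)]
      obtain ⟨x₀, hx₀⟩ := E.Phi_section_of_mem f hr q hq' z _ (mem_fibre hq' (E.res z))
      rw [← hz, hyz, hx₀]
      refine ⟨Submodule.sum_mem _ fun ω _ => E.liftAt_mem (hscaled ω) _ _, ?_⟩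
      rw [map_sum, E.lift0_coe, fibreSum, map_sum, Finset.mul_sum]
      refine Finset.sum_congr rfl fun ω _ => ?_
      rw [hI.liftAt (hscaled ω), hI.integral_comp_mul (fun v => f (ω, v)) _
        (neg_ne_zero.2 (hq' ω)) (hf.integrable_slice ω) (hscaled ω), norm_neg]
    · simp only [E.Phi_section_of_notMem f r q hy]
      rw [E.lift0_of_notMem _ hy, mul_zero]
      exact ⟨Submodule.zero_mem _, map_zero I⟩
  have hy_int : (fun y => I (fun x => E.Phi f (-r) q x y)) =
      (RatFunc.X ^ (r : ℤ) : CX) • E.liftAt (fibreSum Q g) 0 (-r) := by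
    ext1 y
    exact (hy_all y).2
  refine ⟨hx_mem, ?_, fun y => (hy_all y).1, ?_, ?_⟩
  · rw [hx_int]
    exact E.lift0_mem hgi
  · rw [hy_int]
    exact Submodule.smul_mem _ _ (E.liftAt_mem hGi _ _)
  · rw [hx_int, hy_int, map_smul, hI.1 g hgi, hI.liftAt hGi, hG, smul_eq_mul, ← mul_assoc,
      ← zpow_add₀ RatFunc.X_ne_zero, add_neg_cancel, zpow_zero, one_mul]
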